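/- Let λ_h, α1, β1, ν1, n, l be positive integers. Then for every integer s ≥ 0: there exists u ∈ L_odd with |l^s·α1·n/λ_h − u1| + |l^s·β1·n/λ_h − u2| + |l^s·ν1·n/λ_h − u3| < 1 if and only if there exists u' ∈ L_odd with |l^s·α1·(n + 2λ_h)/λ_h − u'1| + |l^s·β1·(n + 2λ_h)/λ_h − u'2| + |l^s·ν1·(n + 2λ_h)/λ_h − u'3| < 1, and in that case the two sums are equal. -/

import Mathlib

/-!
Replacing `n` by `n + 2 * lam` translates the point `t * n / lam` by the integer vector `2 * t`.
The coordinate sum of `2 * t` is even, so this translation maps the odd lattice to itself and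
preserves taxicab distances. The distance found below `1` does not depend on the lattice point
realising it: two odd lattice points within distance `1` of a common point are less than `2` apart,
while their taxicab distance is an even integer, hence `0`.
-/

open Finset

/-- The vectors of `ℤ^ι` with odd coordinate sum; `oddLattice (Fin 3)` is the paper's `L_odd`. -/
def oddLattice (ι : Type*) [Fintype ι] : Set (ι → ℤ) :=
  {u | Odd (∑ i, u i)}

/-- The taxicab (`ℓ¹`) distance from a point `x` to an integer vector `u`, the paper's `Td(x, u)`.
The vector is kept integral so that membership in `oddLattice` applies to it directly. -/
def taxicabDist {ι R : Type*} [Fintype ι] [Ring R] [LinearOrder R] (x : ι → R) (u : ι → ℤ) : R :=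
  ∑ i, |x i - u i|

section

variable {ι : Type*}

theorem even_sum_abs_iff (s : Finset ι) (w : ι → ℤ) :
    Even (∑ i ∈ s, |w i|) ↔ Even (∑ i ∈ s, w i) := by
  have even_diff : Even (∑ i ∈ s, |w i| - ∑ i ∈ s, w i) := by
    rw [← sum_sub_distrib]
    exact even_sum _ fun i _ => Int.even_sub.2 even_abs
  exact Int.even_sub.1 even_diff

variable [Fintype ι]

theorem eq_zero_of_even_sum_of_sum_abs_lt_two {w : ι → ℤ} (hw : Even (∑ i, w i))
    (hlt : ∑ i, |w i| < 2) : w = 0 := by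
  have sum_abs_nonneg : 0 ≤ ∑ i, |w i| := sum_nonneg fun i _ => abs_nonneg (w i)
  have sum_abs_eq_zero : ∑ i, |w i| = 0 := by
    obtain ⟨k, hk⟩ := (even_sum_abs_iff univ w).2 hw
    lia
  ext i
  exact abs_eq_zero.1 <|
    (sum_eq_zero_iff_of_nonneg fun i _ => abs_nonneg (w i)).1 sum_abs_eq_zero i (mem_univ i)

theorem add_mem_oddLattice_iff {u v : ι → ℤ} (hv : Even (∑ i, v i)) :
    u + v ∈ oddLattice ι ↔ u ∈ oddLattice ι := by
  simp only [oddLattice, Set.mem_ofPred_eq, Pi.add_apply, sum_add_distrib, Int.odd_add, hv,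
    iff_true]

section OrderedRing

variable {R : Type*} [Ring R] [LinearOrder R]

theorem taxicabDist_add_intCast (x : ι → R) (u v : ι → ℤ) :
    taxicabDist (fun i => x i + v i) (u + v) = taxicabDist x u := by
  simp only [taxicabDist, Pi.add_apply, Int.cast_add, add_sub_add_right_eq_sub]

theorem exists_oddLattice_taxicabDist_lt_add_intCast_iff (x : ι → R) {v : ι → ℤ}
    (hv : Even (∑ i, v i)) (r : R) :
    (∃ u ∈ oddLattice ι, taxicabDist x u < r) ↔
      ∃ u ∈ oddLattice ι, taxicabDist (fun i => x i + v i) u < r :=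
  (Equiv.addRight v).exists_congr fun u => by
    rw [Equiv.coe_addRight, add_mem_oddLattice_iff hv, taxicabDist_add_intCast]

variable [IsStrictOrderedRing R]

theorem sum_abs_sub_le_taxicabDist_add (x : ι → R) (u v : ι → ℤ) :
    ((∑ i, |u i - v i| : ℤ) : R) ≤ taxicabDist x u + taxicabDist x v := by
  push_cast
  rw [taxicabDist, taxicabDist, ← sum_add_distrib]
  exact sum_le_sum fun i _ => by simpa only [abs_sub_comm] using abs_sub_le (u i : R) (x i) (v i)

theorem eq_of_mem_oddLattice_of_taxicabDist_lt_one {x : ι → R} {u v : ι → ℤ}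
    (hu : u ∈ oddLattice ι) (hv : v ∈ oddLattice ι)
    (hxu : taxicabDist x u < 1) (hxv : taxicabDist x v < 1) : u = v := by
  have even_sum_sub : Even (∑ i, (u - v) i) := by
    simp only [Pi.sub_apply, sum_sub_distrib]
    exact Odd.sub_odd hu hv
  have sum_abs_sub_lt_two : ∑ i, |(u - v) i| < 2 := by
    have := calc
      ((∑ i, |u i - v i| : ℤ) : R) ≤ taxicabDist x u + taxicabDist x v :=
        sum_abs_sub_le_taxicabDist_add x u v
      _ < 1 + 1 := add_lt_add hxu hxv
      _ = (2 : ℤ) := by norm_num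
    exact Int.cast_lt.1 this
  exact sub_eq_zero.1 (eq_zero_of_even_sum_of_sum_abs_lt_two even_sum_sub sum_abs_sub_lt_two)

theorem taxicabDist_eq_taxicabDist_add_intCast {x : ι → R} {u u' v : ι → ℤ}
    (hv : Even (∑ i, v i)) (hu : u ∈ oddLattice ι) (hu' : u' ∈ oddLattice ι)
    (hxu : taxicabDist x u < 1) (hxu' : taxicabDist (fun i => x i + v i) u' < 1) :
    taxicabDist x u = taxicabDist (fun i => x i + v i) u' := by
  rw [← taxicabDist_add_intCast x u v] at hxu ⊢
  rw [eq_of_mem_oddLattice_of_taxicabDist_lt_one ((add_mem_oddLattice_iff hv).2 hu) hu' hxu hxu']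

end OrderedRing

theorem stmt_8_general {K : Type*} [Field K] [LinearOrder K] [IsStrictOrderedRing K]
    (t : ι → ℤ) (n : K) {lam : K} (hlam : lam ≠ 0) :
    ((∃ u ∈ oddLattice ι, taxicabDist (fun i => t i * n / lam) u < 1) ↔
      ∃ u ∈ oddLattice ι, taxicabDist (fun i => t i * (n + 2 * lam) / lam) u < 1) ∧
    ∀ u u', u ∈ oddLattice ι → u' ∈ oddLattice ι →
      taxicabDist (fun i => t i * n / lam) u < 1 →
      taxicabDist (fun i => t i * (n + 2 * lam) / lam) u' < 1 →
      taxicabDist (fun i => t i * n / lam) u =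
        taxicabDist (fun i => t i * (n + 2 * lam) / lam) u' := by
  have translate (i : ι) :
      t i * (n + 2 * lam) / lam = t i * n / lam + ((2 * t i : ℤ) : K) := by
    push_cast
    field_simp
  have even_translation : Even (∑ i, 2 * t i) := even_sum _ fun i _ => even_two_mul (t i)
  simp only [translate]
  exact ⟨exists_oddLattice_taxicabDist_lt_add_intCast_iff _ even_translation 1,
    fun _ _ hu hu' => taxicabDist_eq_taxicabDist_add_intCast even_translation hu hu'⟩

end

/-- Theorem 3.5(2): Δ_{h,n} = Δ_{h,n+2λ_h}; the solvability of Td(l^s·t·n, u) < 1 and its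
value are unchanged when n is replaced by n + 2λ_h. -/
theorem stmt_8 (lamh a1 b1 nu1 n l : ℤ)
    (hlamh : 0 < lamh) (ha1 : 0 < a1) (hb1 : 0 < b1) (hnu1 : 0 < nu1) (hn : 0 < n) (hl : 0 < l)
    (s : ℕ) :
    ((∃ u1 u2 u3 : ℤ, Odd (u1 + u2 + u3) ∧
        |(l ^ s * a1 * n : ℝ) / (lamh : ℝ) - (u1 : ℝ)| +
        |(l ^ s * b1 * n : ℝ) / (lamh : ℝ) - (u2 : ℝ)| +
        |(l ^ s * nu1 * n : ℝ) / (lamh : ℝ) - (u3 : ℝ)| < 1) ↔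
      (∃ u1 u2 u3 : ℤ, Odd (u1 + u2 + u3) ∧
        |(l ^ s * a1 * (n + 2 * lamh) : ℝ) / (lamh : ℝ) - (u1 : ℝ)| +
        |(l ^ s * b1 * (n + 2 * lamh) : ℝ) / (lamh : ℝ) - (u2 : ℝ)| +
        |(l ^ s * nu1 * (n + 2 * lamh) : ℝ) / (lamh : ℝ) - (u3 : ℝ)| < 1)) ∧
    (∀ u1 u2 u3 u1' u2' u3' : ℤ, Odd (u1 + u2 + u3) → Odd (u1' + u2' + u3') →
      |(l ^ s * a1 * n : ℝ) / (lamh : ℝ) - (u1 : ℝ)| +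
        |(l ^ s * b1 * n : ℝ) / (lamh : ℝ) - (u2 : ℝ)| +
        |(l ^ s * nu1 * n : ℝ) / (lamh : ℝ) - (u3 : ℝ)| < 1 →
      |(l ^ s * a1 * (n + 2 * lamh) : ℝ) / (lamh : ℝ) - (u1' : ℝ)| +
        |(l ^ s * b1 * (n + 2 * lamh) : ℝ) / (lamh : ℝ) - (u2' : ℝ)| +
        |(l ^ s * nu1 * (n + 2 * lamh) : ℝ) / (lamh : ℝ) - (u3' : ℝ)| < 1 →
      |(l ^ s * a1 * n : ℝ) / (lamh : ℝ) - (u1 : ℝ)| +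
        |(l ^ s * b1 * n : ℝ) / (lamh : ℝ) - (u2 : ℝ)| +
        |(l ^ s * nu1 * n : ℝ) / (lamh : ℝ) - (u3 : ℝ)| =
      |(l ^ s * a1 * (n + 2 * lamh) : ℝ) / (lamh : ℝ) - (u1' : ℝ)| +
        |(l ^ s * b1 * (n + 2 * lamh) : ℝ) / (lamh : ℝ) - (u2' : ℝ)| +
        |(l ^ s * nu1 * (n + 2 * lamh) : ℝ) / (lamh : ℝ) - (u3' : ℝ)|) := by
  simpa [oddLattice, taxicabDist, Fin.sum_univ_three, Fin.exists_fin_succ_pi,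
    Fin.forall_fin_succ_pi] using
    stmt_8_general (fun i => l ^ s * ![a1, b1, nu1] i) (n : ℝ) (Int.cast_ne_zero.2 hlamh.ne')
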